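/- Let C be an (X,1)-neighbour transitive code in H(m,q) with minimum distance δ ≥ 3 and |C| > 1. Then for a fixed coordinate i₀ ∈ Fin m, the group X_{i₀}^Q acts 2-transitively on Q. -/

import Mathlib

/-!
Take a codeword `α` and change one of its entries, at coordinate `i`, to `a ≠ α i`. As `δ ≥ 3`,
the resulting vertex lies in `C₁` and `α` is the only codeword within distance `1` of it. Hence
an element of `X` carrying one such vertex of `C₁` to another also carries the underlying codeword
to the underlying codeword, so it carries `i` to `i'`, `α i` to `α' i'` and `a` to `a'`. This is
`exists_map_flag`: `X` is transitive on the triples `(α, i, a)` with `α ∈ C` and `a ≠ α i`.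

Consequently `X_{i₀}^Q` is transitive on the pairs `(α i₀, a)` with `α ∈ C` and `a ≠ α i₀`, and
it remains to see that every symbol occurs at coordinate `i₀` of some codeword
(`exists_codeword_entry`). Two distinct codewords `α`, `α'` differ at some coordinate `i`. If
`a ≠ α i₀`, an element of `X` carrying the triple `(α, i, α' i)` to `(α, i₀, a)` maps `α'` to a
codeword with entry `a` at `i₀`.
-/

namespace CTC

variable {m : ℕ} {Q : Type*}

/-- The automorphism of the Hamming graph `H(m,q)` given by the pair `(g, σ)`,
acting on a vertex `α` by `(α^x) i = (g (σ⁻¹ i)) (α (σ⁻¹ i))`. -/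
def toPerm (g : Fin m → Equiv.Perm Q) (σ : Equiv.Perm (Fin m)) :
    Equiv.Perm (Fin m → Q) :=
  (Equiv.piCongrRight g).trans (σ.arrowCongr (Equiv.refl Q))

@[simp] lemma toPerm_apply (g : Fin m → Equiv.Perm Q) (σ : Equiv.Perm (Fin m))
    (α : Fin m → Q) (i : Fin m) :
    toPerm g σ α i = g (σ⁻¹ i) (α (σ⁻¹ i)) := rfl

lemma toPerm_one : toPerm (fun _ : Fin m => (1 : Equiv.Perm Q)) 1 = 1 := by
  ext α i
  rfl

lemma toPerm_mul (g h : Fin m → Equiv.Perm Q) (σ τ : Equiv.Perm (Fin m)) :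
    toPerm g σ * toPerm h τ = toPerm (fun j => g (τ j) * h j) (σ * τ) := by
  ext α i
  simp [toPerm_apply, Equiv.Perm.mul_apply]

lemma toPerm_inv (g : Fin m → Equiv.Perm Q) (σ : Equiv.Perm (Fin m)) :
    (toPerm g σ)⁻¹ = toPerm (fun i => (g (σ⁻¹ i))⁻¹) σ⁻¹ := by
  rw [inv_eq_iff_mul_eq_one, toPerm_mul]
  have h1 : (fun j => g (σ⁻¹ j) * (g (σ⁻¹ j))⁻¹) = fun _ : Fin m => (1 : Equiv.Perm Q) := by
    funext j; simp
  have h2 : σ * σ⁻¹ = 1 := by simp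
  rw [show (fun j => g ((σ⁻¹ : Equiv.Perm (Fin m)) j) * (g (σ⁻¹ j))⁻¹)
      = fun _ : Fin m => (1 : Equiv.Perm Q) from h1, h2, toPerm_one]

/-- The automorphism group of the Hamming graph, as a subgroup of the
permutations of the vertex set. -/
def AutG (m : ℕ) (Q : Type*) : Subgroup (Equiv.Perm (Fin m → Q)) where
  carrier := {x | ∃ g σ, x = toPerm g σ}
  one_mem' := ⟨fun _ => 1, 1, toPerm_one.symm⟩
  mul_mem' := by
    rintro x y ⟨g, σ, rfl⟩ ⟨h, τ, rfl⟩
    exact ⟨_, _, toPerm_mul g h σ τ⟩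
  inv_mem' := by
    rintro x ⟨g, σ, rfl⟩
    exact ⟨_, _, toPerm_inv g σ⟩

/-- The base group `B` of `Aut(Γ)`: the automorphisms `(g, σ)` with `σ = 1`. -/
def BaseG (m : ℕ) (Q : Type*) : Subgroup (Equiv.Perm (Fin m → Q)) where
  carrier := {x | ∃ g, x = toPerm g 1}
  one_mem' := ⟨fun _ => 1, toPerm_one.symm⟩
  mul_mem' := by
    rintro x y ⟨g, rfl⟩ ⟨h, rfl⟩
    refine ⟨fun j => g j * h j, ?_⟩
    rw [toPerm_mul]
    simp
  inv_mem' := by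
    rintro x ⟨g, rfl⟩
    refine ⟨fun i => (g i)⁻¹, ?_⟩
    rw [toPerm_inv]
    simp

/-- The projection `μ(X)` of a subgroup `X ≤ Aut(Γ)` to the group of
permutations of the coordinates. -/
def ProjGroup (X : Subgroup (Equiv.Perm (Fin m → Q))) : Subgroup (Equiv.Perm (Fin m)) where
  carrier := {σ | ∃ g, toPerm g σ ∈ X}
  one_mem' := ⟨fun _ => 1, by rw [toPerm_one]; exact X.one_mem⟩
  mul_mem' := by
    rintro σ τ ⟨g, hg⟩ ⟨h, hh⟩
    exact ⟨fun j => g (τ j) * h j, by rw [← toPerm_mul]; exact X.mul_mem hg hh⟩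
  inv_mem' := by
    rintro σ ⟨g, hg⟩
    exact ⟨fun i => (g (σ⁻¹ i))⁻¹, by rw [← toPerm_inv]; exact X.inv_mem hg⟩

variable [DecidableEq Q]

/-- `d(γ, C)`: the distance from a vertex `γ` to the code `C`. -/
noncomputable def distTo (C : Set (Fin m → Q)) (γ : Fin m → Q) : ℕ :=
  sInf {d | ∃ β ∈ C, hammingDist γ β = d}

/-- `C_i`: the set of vertices at distance `i` from the code `C`. -/
def cell (C : Set (Fin m → Q)) (i : ℕ) : Set (Fin m → Q) :=
  {γ | distTo C γ = i}

/-- The covering radius `ρ` of the code `C`. -/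
noncomputable def covRad (C : Set (Fin m → Q)) : ℕ :=
  sSup {e | ∃ γ, distTo C γ = e}

/-- `S` is a single orbit of the subgroup `X`. -/
def IsOrbitOf (X : Subgroup (Equiv.Perm (Fin m → Q))) (S : Set (Fin m → Q)) : Prop :=
  ∃ γ, S = {β | ∃ x ∈ X, x γ = β}

/-- `C` is `(X,s)`-neighbour transitive: `C_i` is an `X`-orbit for `0 ≤ i ≤ s`. -/
def IsNT (C : Set (Fin m → Q)) (X : Subgroup (Equiv.Perm (Fin m → Q))) (s : ℕ) : Prop :=
  ∀ i ≤ s, IsOrbitOf X (cell C i)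

/-- `C` is `X`-completely transitive: `C_i` is an `X`-orbit for `0 ≤ i ≤ ρ`. -/
def IsCT (C : Set (Fin m → Q)) (X : Subgroup (Equiv.Perm (Fin m → Q))) : Prop :=
  IsNT C X (covRad C)

/-- `δ` is the minimum distance of the code `C`. -/
def IsMinDist (C : Set (Fin m → Q)) (δ : ℕ) : Prop :=
  IsLeast {d | ∃ α ∈ C, ∃ β ∈ C, α ≠ β ∧ hammingDist α β = d} δ

/-- The repetition code `Rep(m,q)`: the set of constant vertices. -/
def RepCode (m : ℕ) (Q : Type*) : Set (Fin m → Q) := {α | ∃ a, α = fun _ => a}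

/-- Two codes are equivalent if one is the image of the other under an
automorphism of the Hamming graph. -/
def CodeEquiv (C C' : Set (Fin m → Q)) : Prop :=
  ∃ x ∈ AutG m Q, ⇑x '' C = C'

/-- `Γ_k(γ)`: the set of vertices at Hamming distance `k` from `γ`. -/
def sphere (γ : Fin m → Q) (k : ℕ) : Set (Fin m → Q) := {β | hammingDist γ β = k}

/-- `C` is `s`-regular. -/
def IsSReg (C : Set (Fin m → Q)) (s : ℕ) : Prop :=
  ∀ i ≤ s, ∀ k ≤ m, ∀ γ₁ ∈ cell C i, ∀ γ₂ ∈ cell C i,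
    (sphere γ₁ k ∩ C).ncard = (sphere γ₂ k ∩ C).ncard

/-- `C` is completely regular. -/
def IsCR (C : Set (Fin m → Q)) : Prop := IsSReg C (covRad C)

end CTC

namespace CTC

variable {m : ℕ} {Q : Type*} [DecidableEq Q]

lemma cell_zero {C : Set (Fin m → Q)} (hC : C.Nonempty) : cell C 0 = C := by
  ext γ
  simp only [cell, distTo, Set.mem_ofPred_eq]
  constructor
  · intro h
    rcases Nat.sInf_eq_zero.1 h with ⟨β, hβ, h0⟩ | h
    · rwa [hammingDist_eq_zero.1 h0]
    · obtain ⟨β, hβ⟩ := hC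
      exact (Set.eq_empty_iff_forall_notMem.1 h _ ⟨β, hβ, rfl⟩).elim
  · intro h
    exact Nat.sInf_eq_zero.2 (Or.inl ⟨γ, h, hammingDist_self γ⟩)

lemma hammingDist_update_le (α : Fin m → Q) (i : Fin m) (a : Q) :
    hammingDist (Function.update α i a) α ≤ 1 := by
  refine Finset.card_le_one.2 ?_
  have key : ∀ j, Function.update α i a j ≠ α j → j = i := by
    intro j hj
    by_contra h
    exact hj (Function.update_of_ne h _ _)
  intro j hj k hk
  rw [key j (by simpa using hj), key k (by simpa using hk)]

lemma update_mem_cell_one {C : Set (Fin m → Q)}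
    (hsep : ∀ α ∈ C, ∀ β ∈ C, hammingDist α β < 3 → α = β)
    {α : Fin m → Q} (hα : α ∈ C) {i : Fin m} {a : Q} (ha : a ≠ α i) :
    Function.update α i a ∈ cell C 1 := by
  have hle := hammingDist_update_le α i a
  have hne : Function.update α i a ≠ α := fun h => ha (by simpa using congrFun h i)
  have h1 : hammingDist (Function.update α i a) α = 1 := by
    have := hammingDist_pos.2 hne
    omega
  change sInf _ = 1
  refine le_antisymm (Nat.sInf_le ⟨α, hα, h1⟩) (Nat.one_le_iff_ne_zero.2 fun h0 => ?_)
  rcases Nat.sInf_eq_zero.1 h0 with ⟨β, hβ, h⟩ | h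
  · rw [← hammingDist_eq_zero.1 h] at hβ
    exact hne (hsep _ hβ _ hα (by omega))
  · exact Set.notMem_empty 1 (h ▸ ⟨α, hα, h1⟩)

lemma IsOrbitOf.exists_map {X : Subgroup (Equiv.Perm (Fin m → Q))} {S : Set (Fin m → Q)}
    (h : IsOrbitOf X S) {α β : Fin m → Q} (hα : α ∈ S) (hβ : β ∈ S) : ∃ x ∈ X, x α = β := by
  obtain ⟨γ, rfl⟩ := h
  obtain ⟨x, hx, rfl⟩ := hα
  obtain ⟨y, hy, rfl⟩ := hβ
  exact ⟨y * x⁻¹, X.mul_mem hy (X.inv_mem hx), by simp⟩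

lemma IsOrbitOf.map_mem {X : Subgroup (Equiv.Perm (Fin m → Q))} {S : Set (Fin m → Q)}
    (h : IsOrbitOf X S) {x : Equiv.Perm (Fin m → Q)} (hx : x ∈ X) {α : Fin m → Q}
    (hα : α ∈ S) : x α ∈ S := by
  obtain ⟨γ, rfl⟩ := h
  obtain ⟨y, hy, rfl⟩ := hα
  exact ⟨x * y, X.mul_mem hx hy, rfl⟩

lemma hammingDist_toPerm (g : Fin m → Equiv.Perm Q) (σ : Equiv.Perm (Fin m))
    (α β : Fin m → Q) :
    hammingDist (toPerm g σ α) (toPerm g σ β) = hammingDist α β := by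
  unfold hammingDist
  refine Finset.card_equiv σ⁻¹ fun j => ?_
  simp

/-- `X` is transitive on the triples consisting of a codeword `α`, a coordinate `i` and a symbol
different from `α i`. -/
lemma exists_map_flag {C : Set (Fin m → Q)} {X : Subgroup (Equiv.Perm (Fin m → Q))}
    (hX : X ≤ AutG m Q) (hsep : ∀ α ∈ C, ∀ β ∈ C, hammingDist α β < 3 → α = β)
    (h0 : IsOrbitOf X C) (h1 : IsOrbitOf X (cell C 1))
    {α α' : Fin m → Q} (hα : α ∈ C) (hα' : α' ∈ C) {i i' : Fin m} {a a' : Q}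
    (ha : a ≠ α i) (ha' : a' ≠ α' i') :
    ∃ (g : Fin m → Equiv.Perm Q) (σ : Equiv.Perm (Fin m)),
      toPerm g σ ∈ X ∧ toPerm g σ α = α' ∧ σ i = i' ∧ g i (α i) = α' i' ∧ g i a = a' := by
  obtain ⟨x, hx, hxν⟩ :=
    h1.exists_map (update_mem_cell_one hsep hα ha) (update_mem_cell_one hsep hα' ha')
  obtain ⟨g, σ, rfl⟩ := hX hx
  have hmap : toPerm g σ α = α' := by
    refine hsep _ (h0.map_mem hx hα) _ hα' ?_
    have t := hammingDist_triangle_left (toPerm g σ α) α' (toPerm g σ (Function.update α i a))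
    rw [hammingDist_toPerm] at t
    rw [hxν] at t
    have e1 := hammingDist_update_le α i a
    have e2 := hammingDist_update_le α' i' a'
    omega
  have hσ : σ i = i' := by
    by_contra hne
    -- The images of `α` and of its neighbour differ at `σ i`, but `α'` and its neighbour do not.
    have e1 := congrFun hxν (σ i)
    have e2 := congrFun hmap (σ i)
    rw [Function.update_of_ne hne] at e1
    have hσi : σ⁻¹ (σ i) = i := σ.symm_apply_apply i
    simp only [toPerm_apply, hσi, Function.update_self] at e1 e2
    exact ha ((g i).injective (e1.trans e2.symm))
  subst hσ
  refine ⟨g, σ, hx, hmap, rfl, ?_, ?_⟩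
  · simpa using congrFun hmap (σ i)
  · simpa using congrFun hxν (σ i)

lemma exists_codeword_entry {C : Set (Fin m → Q)} {X : Subgroup (Equiv.Perm (Fin m → Q))}
    (hX : X ≤ AutG m Q) (hsep : ∀ α ∈ C, ∀ β ∈ C, hammingDist α β < 3 → α = β)
    (h0 : IsOrbitOf X C) (h1 : IsOrbitOf X (cell C 1)) (hC : C.Nontrivial)
    (i₀ : Fin m) (a : Q) : ∃ α ∈ C, α i₀ = a := by
  obtain ⟨α, hα, α', hα', hne⟩ := hC
  by_cases hαa : α i₀ = a
  · exact ⟨α, hα, hαa⟩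
  obtain ⟨i, hi⟩ := Function.ne_iff.1 hne
  obtain ⟨g, σ, hx, -, hσ, -, hga⟩ :=
    exists_map_flag hX hsep h0 h1 hα hα (i := i) (i' := i₀) hi.symm (Ne.symm hαa)
  refine ⟨_, h0.map_mem hx hα', ?_⟩
  subst hσ
  simpa using hga

end CTC

open CTC in
/-- Proposition 2.7: for an `(X,1)`-neighbour transitive code with
`δ ≥ 3` and `|C| > 1`, the group `X_{i₀}^Q` acts 2-transitively on `Q`. -/
theorem statement6 {m : ℕ} {Q : Type*} [Fintype Q] [DecidableEq Q]
    (hm : 2 ≤ m) (hq2 : 2 ≤ Fintype.card Q)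
    (C : Set (Fin m → Q)) (hC : 1 < C.ncard)
    (X : Subgroup (Equiv.Perm (Fin m → Q))) (hX : X ≤ AutG m Q)
    (hρ : 1 ≤ covRad C) (hNT : IsNT C X 1)
    (δ : ℕ) (hδ : IsMinDist C δ) (hδ3 : 3 ≤ δ)
    (i₀ : Fin m) :
    ∀ a b c d : Q, a ≠ b → c ≠ d →
      ∃ (g : Fin m → Equiv.Perm Q) (σ : Equiv.Perm (Fin m)),
        toPerm g σ ∈ X ∧ σ i₀ = i₀ ∧ g i₀ a = c ∧ g i₀ b = d := by
  intro a b c d hab hcd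
  have hnt : C.Nontrivial := Set.one_lt_ncard_iff_nontrivial.1 hC
  have h0 : IsOrbitOf X C := by
    simpa only [cell_zero hnt.nonempty] using hNT 0 (Nat.zero_le 1)
  have h1 : IsOrbitOf X (cell C 1) := hNT 1 le_rfl
  have hsep : ∀ α ∈ C, ∀ β ∈ C, hammingDist α β < 3 → α = β := by
    intro α hα β hβ hlt
    by_contra hne
    have := hδ.2 ⟨α, hα, β, hβ, hne, rfl⟩
    omega
  obtain ⟨α, hα, rfl⟩ := exists_codeword_entry hX hsep h0 h1 hnt i₀ a
  obtain ⟨β, hβ, rfl⟩ := exists_codeword_entry hX hsep h0 h1 hnt i₀ c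
  obtain ⟨g, σ, hx, -, hσ, hg, hgb⟩ := exists_map_flag hX hsep h0 h1 hα hβ hab.symm hcd.symm
  exact ⟨g, σ, hx, hσ, hg, hgb⟩
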